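/- Let (X,T) be a dynamical system satisfying the specification property, let (Φ_i)_{i≥1} be a sequence of continuous functions dense in the unit ball of C(X), let (p_i)_{i≥1} be positive numbers with Σ p_i = 1, let μ be a T-invariant Borel probability measure and α = (α_i)_{i≥1} with α_i = ∫ Φ_i dμ. Then Λ_Φ(α) ≥ h_μ, where Λ_Φ(α) is the exponential growth rate of covering numbers of the approximate level sets X_Φ(α,δ,n). -/

import Mathlib

open MeasureTheory Filter Topology Set
open scoped ENNReal NNReal

/-!  General definitions: Bowen topological entropy (via covers by Bowen balls),
measure-theoretic (Kolmogorov–Sinai) entropy, generic points, saturated systems,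
and the specification property. -/

variable {X : Type*}

/-- The Bowen ball of center `x`, order `n`, radius `ε` (for the metric
`d_n(x,y) = max_{0 ≤ j < n} d(T^j x, T^j y)`). -/
def bowenBall [PseudoMetricSpace X] (T : X → X) (x : X) (n : ℕ) (ε : ℝ) : Set X :=
  {y | ∀ j < n, dist (T^[j] x) (T^[j] y) < ε}

/-- `H_n^s(Z,ε)`: infimum of `Σ_i exp(-s n_i)` over countable covers of `Z` by Bowen balls
`B_{n_i}(x_i,ε)` with all `n_i ≥ n`. -/
noncomputable def bowenH [PseudoMetricSpace X] (T : X → X) (Z : Set X) (s ε : ℝ) (n : ℕ) :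
    ℝ≥0∞ :=
  ⨅ (C : Set (X × ℕ)) (_ : C.Countable) (_ : ∀ p ∈ C, n ≤ p.2)
    (_ : Z ⊆ ⋃ p ∈ C, bowenBall T p.1 p.2 ε),
    ∑' p : C, ENNReal.ofReal (Real.exp (-s * ((p : X × ℕ).2 : ℝ)))

/-- `h_top(Z,ε)`: the critical exponent of `s ↦ H^s(Z,ε) = sup_n H_n^s(Z,ε)`. -/
noncomputable def bowenEntropyRes [PseudoMetricSpace X] (T : X → X) (Z : Set X) (ε : ℝ) :
    ℝ≥0∞ :=
  sInf ((fun s : ℝ≥0 => (s : ℝ≥0∞)) '' {s : ℝ≥0 | (⨆ n, bowenH T Z (s : ℝ) ε n) = 0})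

/-- Bowen topological entropy of a subset `Z`: `h_top(Z) = lim_{ε → 0} h_top(Z,ε)`
(the limit being a supremum by monotonicity in `ε`). -/
noncomputable def bowenEntropy [PseudoMetricSpace X] (T : X → X) (Z : Set X) : ℝ≥0∞ :=
  ⨆ (ε : ℝ) (_ : 0 < ε), bowenEntropyRes T Z ε

/-- Entropy of the partition `P ∨ T⁻¹P ∨ ⋯ ∨ T⁻⁽ⁿ⁻¹⁾P`, where a countable partition is
encoded as a function `P : X → ℕ`: it is the Shannon entropy of the map
`x ↦ (P x, P (T x), …, P (Tⁿ⁻¹ x))`. -/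
noncomputable def partInfo [MeasurableSpace X] (T : X → X) (μ : Measure X) (P : X → ℕ)
    (n : ℕ) : ℝ≥0∞ :=
  ∑' l : List ℕ, ENNReal.ofReal (Real.negMulLog
    ((μ ((fun x => (List.range n).map fun j => P (T^[j] x)) ⁻¹' {l})).toReal))

/-- Measure-theoretic (Kolmogorov–Sinai) entropy `h_μ(T)`: supremum over finite measurable
partitions `P` of `lim_n (1/n) H_μ(P ∨ T⁻¹P ∨ ⋯ ∨ T⁻⁽ⁿ⁻¹⁾P)` (the limit exists by
subadditivity, so it may be written as a `liminf`). -/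
noncomputable def ksEntropy [MeasurableSpace X] (T : X → X) (μ : Measure X) : ℝ≥0∞ :=
  ⨆ (P : X → ℕ) (_ : Measurable P) (_ : (Set.range P).Finite),
    Filter.atTop.liminf fun n : ℕ => partInfo T μ P n / (n : ℝ≥0∞)

/-- `x` is a generic point for `μ` : the empirical measures `(1/n) Σ_{j<n} δ_{T^j x}`
converge to `μ` in the weak-star topology, i.e. Birkhoff averages of every continuous
function converge to its integral. -/
def IsGeneric [TopologicalSpace X] [MeasurableSpace X] (T : X → X) (μ : Measure X)
    (x : X) : Prop :=
  ∀ f : C(X, ℝ), Tendsto (fun n : ℕ => (∑ j ∈ Finset.range n, f (T^[j] x)) / (n : ℝ))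
    atTop (𝓝 (∫ y, f y ∂μ))

/-- `μ ∈ V(x)` : `μ` is a weak-star limit point of the empirical measures of `x`. -/
def IsLimitMeasure [TopologicalSpace X] [MeasurableSpace X] (T : X → X) (x : X)
    (μ : Measure X) : Prop :=
  ∃ φ : ℕ → ℕ, StrictMono φ ∧ ∀ f : C(X, ℝ),
    Tendsto (fun m : ℕ => (∑ j ∈ Finset.range (φ m), f (T^[j] x)) / (φ m : ℝ))
      atTop (𝓝 (∫ y, f y ∂μ))

/-- A system is saturated if `h_top(G_μ) = h_μ` for every invariant Borel probability
measure `μ`. -/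
def Saturated [PseudoMetricSpace X] [MeasurableSpace X] (T : X → X) : Prop :=
  ∀ μ : Measure X, IsProbabilityMeasure μ → MeasurePreserving T μ μ →
    bowenEntropy T {x | IsGeneric T μ x} = ksEntropy T μ

/-- The specification property. -/
def SpecificationProperty [PseudoMetricSpace X] (T : X → X) : Prop :=
  ∀ ε : ℝ, 0 < ε → ∃ m : ℕ, 1 ≤ m ∧
    ∀ k : ℕ, 2 ≤ k → ∀ x : ℕ → X, ∀ a b : ℕ → ℕ,
      (∀ i < k, a i ≤ b i) →
      (∀ i, i + 1 < k → b i + m ≤ a (i + 1)) →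
      ∃ y : X, ∀ i < k, ∀ n ≤ b i - a i,
        dist (T^[a i + n] y) (T^[n] (x i)) < ε

/-- The Birkhoff average `A_n f(x) = (1/n) Σ_{j<n} f(T^j x)` of a real function. -/
noncomputable def birkhoffAvgR {X : Type*} (T : X → X) (f : X → ℝ) (n : ℕ) (x : X) : ℝ :=
  (∑ j ∈ Finset.range n, f (T^[j] x)) / (n : ℝ)

/-- The approximate level set `X_Φ(α,δ,n) = {x : Σ_i p_i |A_nΦ_i(x) - α_i| < δ}`. -/
def levelSet {X : Type*} (T : X → X) (Φ : ℕ → X → ℝ) (p α : ℕ → ℝ) (δ : ℝ) (n : ℕ) :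
    Set X :=
  {x | (∑' i : ℕ, p i * |birkhoffAvgR T (Φ i) n x - α i|) < δ}

/-- `N(S,n,ε)`: the minimal number of Bowen balls `B_n(x,ε)` needed to cover `S`. -/
noncomputable def coverNum {X : Type*} [PseudoMetricSpace X] (T : X → X) (S : Set X)
    (n : ℕ) (ε : ℝ) : ℕ :=
  sInf {m : ℕ | ∃ F : Finset X, F.card = m ∧ S ⊆ ⋃ x ∈ F, bowenBall T x n ε}

/-- `Λ_Φ(α) = lim_{ε→0} lim_{δ→0} limsup_n (1/n) log N(α,δ,n,ε)`; the limit in `ε` is an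
increasing limit (a supremum) and the limit in `δ` is a decreasing limit (an infimum). -/
noncomputable def LambdaPhi {X : Type*} [PseudoMetricSpace X] (T : X → X)
    (Φ : ℕ → X → ℝ) (p α : ℕ → ℝ) : ℝ≥0∞ :=
  ⨆ (ε : ℝ) (_ : 0 < ε), ⨅ (δ : ℝ) (_ : 0 < δ),
    Filter.atTop.limsup fun n : ℕ =>
      ENNReal.ofReal (Real.log (coverNum T (levelSet T Φ p α δ n) n ε) / (n : ℝ))

/-!
The functions `p i • Φ i` are the coordinates of a continuous map `F : X → ℓ¹`, and the weighted
distance defining `levelSet` is the `ℓ¹` distance from the Birkhoff average of `F` to `∫ F dμ`.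

Let `P` be a finite partition and `H` the entropy of its `n`-itineraries. Draw points
`ω 0, ω 1, …` independently from `μ` and let `y` shadow, by specification, the orbit segments of
length `n` of `ω 0, …, ω (k - 1)`, with gaps bounded independently of `n`. By the strong law of
large numbers, for most `ω` the orbit of `y` has Birkhoff average close to `∫ F dμ`, the segments
carry information about `k * H`, and they rarely leave a closed set `K` of almost full measure on
which `P` is uniformly locally constant. If two such `y` lie in a common Bowen ball, then their
segments are close to each other, so their itineraries differ only at times spent outside `K`:
they lie in a Hamming ball of small radius, which contains at most `exp (η * k * n)` words. Each
word has probability at most about `exp (-k * H)`, so covering half of the `ω` takes at least about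
`exp (k * (H - η * n))` Bowen balls.
-/

section HammingBall

variable {ι A : Type*} [Fintype ι] [DecidableEq A]

theorem exists_forall_hammingDist_le_card {Ω : Type*} [Nonempty A] {E : Set Ω} {w : Ω → ι → A}
    {bad : Ω → Finset ι}
    (h : ∀ ω ∈ E, ∀ ω' ∈ E, ∀ i, i ∉ bad ω → i ∉ bad ω' → w ω i = w ω' i) :
    ∃ σ : ι → A, ∀ ω ∈ E, hammingDist (w ω) σ ≤ (bad ω).card := by
  have exists_letter (i : ι) : ∃ a, ∀ ω ∈ E, i ∉ bad ω → w ω i = a := by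
    by_cases hi : ∃ ω ∈ E, i ∉ bad ω
    · obtain ⟨ω₀, hω₀, hi₀⟩ := hi
      exact ⟨w ω₀ i, fun ω hω hωi => h ω hω ω₀ hω₀ i hωi hi₀⟩
    · push Not at hi
      exact ⟨Classical.arbitrary A, fun ω hω hωi => absurd (hi ω hω) hωi⟩
  choose σ hσ using exists_letter
  refine ⟨σ, fun ω hω => Finset.card_le_card fun i hi => ?_⟩
  by_contra hbad
  exact (Finset.mem_filter.1 hi).2 (hσ i ω hω hbad)

variable [Fintype A]

theorem sum_exp_neg_mul_hammingDist_le [DecidableEq ι] (τ : ℝ) (σ : ι → A) :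
    ∑ w : ι → A, Real.exp (-τ * hammingDist w σ) ≤
      (1 + Fintype.card A * Real.exp (-τ)) ^ Fintype.card ι := by
  have exp_eq_prod (w : ι → A) : Real.exp (-τ * hammingDist w σ) =
      ∏ i, if w i ≠ σ i then Real.exp (-τ) else 1 := by
    rw [Finset.prod_ite, Finset.prod_const, Finset.prod_const_one, mul_one, ← Real.exp_nat_mul,
      mul_comm, hammingDist]
  have sum_letter_le (i : ι) : ∑ a, (if a ≠ σ i then Real.exp (-τ) else 1) ≤
      1 + Fintype.card A * Real.exp (-τ) := by
    calc ∑ a, (if a ≠ σ i then Real.exp (-τ) else 1)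
        ≤ ∑ a, ((if a = σ i then 1 else 0) + Real.exp (-τ)) := by
          refine Finset.sum_le_sum fun a _ => ?_
          split_ifs <;> simp_all [Real.exp_nonneg]
      _ = 1 + Fintype.card A * Real.exp (-τ) := by
          simp [Finset.sum_add_distrib]
  calc ∑ w : ι → A, Real.exp (-τ * hammingDist w σ)
      = ∏ i, ∑ a, (if a ≠ σ i then Real.exp (-τ) else 1) := by
        simp only [exp_eq_prod]
        rw [Finset.prod_univ_sum, Fintype.piFinset_univ]
    _ ≤ ∏ _i : ι, (1 + Fintype.card A * Real.exp (-τ)) :=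
        Finset.prod_le_prod (fun i _ => by positivity) fun i _ => sum_letter_le i
    _ = (1 + Fintype.card A * Real.exp (-τ)) ^ Fintype.card ι := by
        rw [Finset.prod_const, Finset.card_univ]

theorem ncard_hammingDist_le_le_exp {τ : ℝ} (hτ : 0 ≤ τ) (r : ℝ) (σ : ι → A) :
    ({w : ι → A | (hammingDist w σ : ℝ) ≤ r}.ncard : ℝ) ≤
      Real.exp (τ * r + Fintype.card A * Real.exp (-τ) * Fintype.card ι) := by
  classical
  have one_le {w : ι → A} (hw : (hammingDist w σ : ℝ) ≤ r) :
      1 ≤ Real.exp (τ * r) * Real.exp (-τ * hammingDist w σ) := by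
    rw [← Real.exp_add]
    exact Real.one_le_exp (by nlinarith)
  calc ({w : ι → A | (hammingDist w σ : ℝ) ≤ r}.ncard : ℝ)
      = ∑ w : ι → A, if (hammingDist w σ : ℝ) ≤ r then (1 : ℝ) else 0 := by
        rw [Finset.sum_boole, ← Set.ncard_coe_finset, Finset.coe_filter_univ]
    _ ≤ ∑ w : ι → A, Real.exp (τ * r) * Real.exp (-τ * hammingDist w σ) := by
        refine Finset.sum_le_sum fun w _ => ?_
        split_ifs with hw
        · exact one_le hw
        · positivity
    _ ≤ Real.exp (τ * r) * Real.exp (Fintype.card A * Real.exp (-τ)) ^ Fintype.card ι := by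
        rw [← Finset.mul_sum]
        gcongr
        refine (sum_exp_neg_mul_hammingDist_le τ σ).trans ?_
        gcongr
        linarith [Real.add_one_le_exp (Fintype.card A * Real.exp (-τ))]
    _ = Real.exp (τ * r + Fintype.card A * Real.exp (-τ) * Fintype.card ι) := by
        rw [← Real.exp_nat_mul, ← Real.exp_add, mul_comm (Fintype.card ι : ℝ)]

theorem exists_ncard_hammingDist_le_le_exp (A : Type*) [Finite A] [DecidableEq A] {η : ℝ}
    (hη : 0 < η) : ∃ γ > 0, ∀ (ι : Type*) [Fintype ι] (σ : ι → A),
      ({w : ι → A | (hammingDist w σ : ℝ) ≤ γ * Fintype.card ι}.ncard : ℝ) ≤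
        Real.exp (η * Fintype.card ι) := by
  have := Fintype.ofFinite A
  have small_weight : ∀ᶠ τ in atTop, Fintype.card A * Real.exp (-τ) < η / 2 := by
    have : Tendsto (fun τ : ℝ => Fintype.card A * Real.exp (-τ)) atTop (𝓝 (Fintype.card A * 0)) :=
      (Real.tendsto_exp_neg_atTop_nhds_zero).const_mul _
    exact this.eventually_lt_const (by simpa using hη)
  obtain ⟨τ, hτη, hτ⟩ := (small_weight.and (eventually_gt_atTop 0)).exists
  refine ⟨η / (2 * τ), by positivity, fun ι _ σ => ?_⟩
  refine (ncard_hammingDist_le_le_exp hτ.le _ σ).trans (Real.exp_le_exp.2 ?_)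
  have radius_cost : τ * (η / (2 * τ) * Fintype.card ι) = η / 2 * Fintype.card ι := by
    field_simp
  nlinarith [Nat.cast_nonneg (α := ℝ) (Fintype.card ι)]

end HammingBall

theorem measureReal_le_ncard_image_mul {Ω β : Type*} [MeasurableSpace Ω] {μ : Measure Ω}
    [IsFiniteMeasure μ] {f : Ω → β} {E : Set Ω} (hE : (f '' E).Finite) {b : ℝ}
    (hb : ∀ ω ∈ E, μ.real (f ⁻¹' {f ω}) ≤ b) : μ.real E ≤ (f '' E).ncard * b := by
  have cover : E ⊆ ⋃ y ∈ hE.toFinset, f ⁻¹' {y} := fun ω hω =>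
    mem_biUnion (by simpa using mem_image_of_mem f hω) rfl
  calc μ.real E ≤ μ.real (⋃ y ∈ hE.toFinset, f ⁻¹' {y}) :=
        measureReal_mono cover (measure_ne_top μ _)
    _ ≤ ∑ y ∈ hE.toFinset, μ.real (f ⁻¹' {y}) := measureReal_biUnion_finset_le _ _
    _ ≤ ∑ _y ∈ hE.toFinset, b := by
        refine Finset.sum_le_sum fun y hy => ?_
        obtain ⟨ω, hω, rfl⟩ := hE.mem_toFinset.1 hy
        exact hb ω hω
    _ = (f '' E).ncard * b := by
        rw [Finset.sum_const, nsmul_eq_mul, ncard_eq_toFinset_card _ hE]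

section InfiniteProduct

theorem eventually_lt_measureReal_of_ae_eventually {Ω : Type*} [MeasurableSpace Ω] {ℙ : Measure Ω}
    [IsProbabilityMeasure ℙ] {E : ℕ → Set Ω} (hE : ∀ᵐ ω ∂ℙ, ∀ᶠ k in atTop, ω ∈ E k) {c : ℝ}
    (hc : c < 1) : ∀ᶠ k in atTop, c < ℙ.real (E k) := by
  let G : ℕ → Set Ω := fun k => {ω | ∀ l ≥ k, ω ∈ E l}
  have G_mono : Monotone G := fun k l hkl ω hω i hi => hω i (hkl.trans hi)
  have G_ae : ⋃ k, G k =ᵐ[ℙ] univ := by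
    filter_upwards [hE] with ω hω
    exact propext ⟨fun _ => mem_univ ω, fun _ => mem_iUnion.2 (eventually_atTop.1 hω)⟩
  have tendsto_G : Tendsto (fun k => ℙ.real (G k)) atTop (𝓝 1) := by
    have := tendsto_measure_iUnion_atTop (μ := ℙ) G_mono
    rw [measure_congr G_ae, measure_univ] at this
    exact (ENNReal.tendsto_toReal ENNReal.one_ne_top).comp this
  filter_upwards [tendsto_G.eventually_const_lt hc] with k hk
  exact hk.trans_le (measureReal_mono fun ω hω => hω k le_rfl)

theorem ae_tendsto_average_infinitePi {Y E : Type*} [MeasurableSpace Y] [NormedAddCommGroup E]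
    [NormedSpace ℝ E] [CompleteSpace E] {μ : Measure Y} [IsProbabilityMeasure μ] {f : Y → E}
    (hf : Integrable f μ) :
    ∀ᵐ ω ∂(Measure.infinitePi fun _ : ℕ => μ),
      Tendsto (fun k : ℕ => (k : ℝ)⁻¹ • ∑ j ∈ Finset.range k, f (ω j)) atTop
        (𝓝 (∫ x, f x ∂μ)) := by
  borelize E
  set ℙ := Measure.infinitePi fun _ : ℕ => μ
  have eval (j : ℕ) : MeasurePreserving (Function.eval j) ℙ μ :=
    measurePreserving_eval_infinitePi _ j
  have integrable_coord (j : ℕ) : Integrable (fun ω : ℕ → Y => f (ω j)) ℙ :=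
    (eval j).integrable_comp_of_integrable hf
  have integrable_map (j : ℕ) : Integrable f (ℙ.map (Function.eval j)) := by
    rwa [(eval j).map_eq]
  have map_coord (j : ℕ) : ℙ.map (fun ω => f (ω j)) = μ.map f := by
    have := AEMeasurable.map_map_of_aemeasurable (integrable_map j).aemeasurable
      (eval j).aemeasurable
    rw [(eval j).map_eq] at this
    exact this.symm
  have indepFun_coord (i j : ℕ) (hij : i ≠ j) :
      ProbabilityTheory.IndepFun (fun ω => f (ω i)) (fun ω => f (ω j)) ℙ :=
    ((ProbabilityTheory.iIndepFun_infinitePi (P := fun _ : ℕ => μ) (X := fun _ => id)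
      fun _ => measurable_id).indepFun hij).comp₀ (eval i).aemeasurable (eval j).aemeasurable
      (integrable_map i).aemeasurable (integrable_map j).aemeasurable
  have integral_coord : ∫ ω, f (ω 0) ∂ℙ = ∫ x, f x ∂μ := by
    rw [← (eval 0).map_eq, integral_map (eval 0).aemeasurable
      (integrable_map 0).aestronglyMeasurable]
  rw [← integral_coord]
  exact ProbabilityTheory.strong_law_ae (μ := ℙ) (fun j ω => f (ω j)) (integrable_coord 0)
    indepFun_coord fun j => ⟨(integrable_coord j).aemeasurable, (integrable_coord 0).aemeasurable,
      (map_coord j).trans (map_coord 0).symm⟩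

end InfiniteProduct

theorem exists_isClosed_uniformly_constant [PseudoMetricSpace X] [CompactSpace X]
    [MeasurableSpace X] [BorelSpace X] (μ : Measure X) [IsFiniteMeasure μ] {A : Type*} [Finite A]
    [MeasurableSpace A] [MeasurableSingletonClass A] {P : X → A} (hP : Measurable P) {γ : ℝ}
    (hγ : 0 < γ) :
    ∃ K, IsClosed K ∧ μ.real Kᶜ < γ ∧
      ∃ ε > 0, ∀ x ∈ K, ∀ y ∈ K, dist x y < ε → P x = P y := by
  obtain ⟨γ', γ'_pos, sum_γ'⟩ :=
    ENNReal.exists_pos_sum_of_countable' (ENNReal.ofReal_pos.2 hγ).ne' A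
  choose C hCsub hCclosed hCμ using fun a =>
    (hP (measurableSet_singleton a)).exists_isClosed_sdiff_lt (measure_ne_top μ _) (γ'_pos a).ne'
  have compl_subset : (⋃ a, C a)ᶜ ⊆ ⋃ a, P ⁻¹' {a} \ C a := fun x hx =>
    mem_iUnion.2 ⟨P x, rfl, fun hxC => hx (mem_iUnion_of_mem _ hxC)⟩
  have measure_compl_lt : μ (⋃ a, C a)ᶜ < ENNReal.ofReal γ :=
    calc μ (⋃ a, C a)ᶜ ≤ ∑' a, μ (P ⁻¹' {a} \ C a) :=
          (measure_mono compl_subset).trans (measure_iUnion_le _)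
      _ ≤ ∑' a, γ' a := ENNReal.tsum_le_tsum fun a => (hCμ a).le
      _ < ENNReal.ofReal γ := sum_γ'
  let : UniformSpace A := ⊥
  have continuousOn_P : ContinuousOn P (⋃ a, C a) :=
    (locallyFinite_of_finite C).continuousOn_iUnion hCclosed fun a =>
      (continuousOn_const (c := a)).congr fun x hx => hCsub a hx
  have isClosed_C : IsClosed (⋃ a, C a) := isClosed_iUnion_of_finite hCclosed
  have unif := isClosed_C.isCompact.uniformContinuousOn_of_continuous continuousOn_P
    (DiscreteUniformity.relId_mem_uniformity A)
  obtain ⟨ε, hε, hPε⟩ := Metric.mem_uniformity_dist.1 (mem_inf_principal.1 unif)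
  refine ⟨⋃ a, C a, isClosed_C, ENNReal.toReal_lt_of_lt_ofReal measure_compl_lt, ε, hε,
    fun x hx y hy hxy => hPε hxy ⟨hx, hy⟩⟩

section ShannonEntropy

variable [MeasurableSpace X] {A : Type*}

/-- The information `-log μ(g = g x)` carried by the cell of the partition `{g = b}` at `x`. -/
noncomputable def information {B : Type*} (μ : Measure X) (g : X → B) (x : X) : ℝ :=
  -Real.log (μ.real (g ⁻¹' {g x}))

/-- The Shannon entropy of the finite partition of `X` into the fibres of `g`. -/
noncomputable def shannonEntropy {B : Type*} [Fintype B] (μ : Measure X) (g : X → B) : ℝ :=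
  ∑ b, Real.negMulLog (μ.real (g ⁻¹' {b}))

/-- The `n`-itinerary of `x` with respect to `P`, that is, the word
`P x, P (T x), …, P (T^[n - 1] x)`. Its fibres form the partition `⋁ j < n, T⁻ʲ P`. -/
def itinerary (T : X → X) (P : X → A) (n : ℕ) (x : X) : Fin n → A :=
  fun j => P (T^[j] x)

section Information

variable {B : Type*} [MeasurableSpace B] [MeasurableSingletonClass B] {μ : Measure X}
  [IsFiniteMeasure μ] {g : X → B}

theorem integrable_information [Finite B] (hg : Measurable g) :
    Integrable (information μ g) μ :=
  (Integrable.of_finite (μ := μ.map g)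
    (f := fun b => -Real.log (μ.real (g ⁻¹' {b})))).comp_measurable hg

theorem integral_information [Fintype B] (hg : Measurable g) :
    ∫ x, information μ g x ∂μ = shannonEntropy μ g := by
  calc ∫ x, information μ g x ∂μ = ∫ b, -Real.log (μ.real (g ⁻¹' {b})) ∂(μ.map g) :=
        (integral_map (f := fun b => -Real.log (μ.real (g ⁻¹' {b}))) hg.aemeasurable
          (measurable_of_finite _).aestronglyMeasurable).symm
    _ = ∑ b, (μ.map g).real {b} • -Real.log (μ.real (g ⁻¹' {b})) :=
        integral_fintype .of_finite
    _ = shannonEntropy μ g := by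
        refine Finset.sum_congr rfl fun b _ => ?_
        rw [map_measureReal_apply hg (measurableSet_singleton b), Real.negMulLog, smul_eq_mul,
          neg_mul, mul_neg]

end Information

theorem measurable_itinerary [MeasurableSpace A] {T : X → X} (hT : Measurable T) {P : X → A}
    (hP : Measurable P) (n : ℕ) : Measurable (itinerary T P n) :=
  measurable_pi_lambda _ fun j => hP.comp (hT.iterate j)

theorem partInfo_comp_eq_ofReal_shannonEntropy [Fintype A] (T : X → X) (μ : Measure X)
    [IsProbabilityMeasure μ] (P : X → A) {e : A → ℕ} (he : Function.Injective e) (n : ℕ) :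
    partInfo T μ (e ∘ P) n = ENNReal.ofReal (shannonEntropy μ (itinerary T P n)) := by
  let code : (Fin n → A) → List ℕ := fun w => List.ofFn (e ∘ w)
  have code_injective : Function.Injective code := List.ofFn_injective.comp he.comp_left
  have code_itinerary (x : X) :
      ((List.range n).map fun j => (e ∘ P) (T^[j] x)) = code (itinerary T P n x) := by
    simp [code, itinerary, List.ofFn_eq_map, ← List.map_coe_finRange_eq_range, Function.comp_def]
  have preimage_code (w : Fin n → A) :
      (fun x => code (itinerary T P n x)) ⁻¹' {code w} = itinerary T P n ⁻¹' {w} := by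
    ext x
    exact code_injective.eq_iff
  have support_subset : Function.support (fun l => ENNReal.ofReal (Real.negMulLog
      (μ.real ((fun x => code (itinerary T P n x)) ⁻¹' {l})))) ⊆ range code := by
    refine fun l hl => by_contra fun hrange => hl ?_
    have : (fun x => code (itinerary T P n x)) ⁻¹' {l} = ∅ :=
      eq_empty_of_forall_notMem fun x hx => hrange ⟨_, hx⟩
    simp [this]
  calc partInfo T μ (e ∘ P) n
      = ∑' l, ENNReal.ofReal (Real.negMulLog
          (μ.real ((fun x => code (itinerary T P n x)) ⁻¹' {l}))) := by
        simp only [partInfo, code_itinerary, Measure.real]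
    _ = ∑ w, ENNReal.ofReal (Real.negMulLog (μ.real (itinerary T P n ⁻¹' {w}))) := by
        rw [← code_injective.tsum_eq support_subset, tsum_fintype]
        simp only [preimage_code]
    _ = ENNReal.ofReal (shannonEntropy μ (itinerary T P n)) :=
        (ENNReal.ofReal_sum_of_nonneg fun w _ =>
          Real.negMulLog_nonneg measureReal_nonneg measureReal_le_one).symm

end ShannonEntropy

section BirkhoffAverage

theorem birkhoffSum_mul {M : Type*} [AddCommMonoid M] (T : X → X) (F : X → M) (k L : ℕ) (x : X) :
    birkhoffSum T F (k * L) x = ∑ j ∈ Finset.range k, birkhoffSum T F L (T^[j * L] x) := by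
  induction k with
  | zero => simp
  | succ k ih => rw [Nat.succ_mul, birkhoffSum_add, ih, Finset.sum_range_succ]

theorem birkhoffAverage_mul (R : Type*) {M : Type*} [Semifield R] [AddCommMonoid M] [Module R M]
    (T : X → X) (F : X → M) (k L : ℕ) (x : X) :
    birkhoffAverage R T F (k * L) x =
      (k : R)⁻¹ • ∑ j ∈ Finset.range k, birkhoffAverage R T F L (T^[j * L] x) := by
  simp only [birkhoffAverage, birkhoffSum_mul, Nat.cast_mul, mul_inv, mul_smul, Finset.smul_sum]

section Integral

variable [MeasurableSpace X] {μ : Measure X} {T : X → X} {E : Type*} [NormedAddCommGroup E]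
  {F : X → E}

theorem integrable_birkhoffSum (hT : MeasurePreserving T μ μ) (hF : Integrable F μ) (n : ℕ) :
    Integrable (birkhoffSum T F n) μ :=
  integrable_finsetSum _ fun j _ => (hT.iterate j).integrable_comp_of_integrable hF

variable [NormedSpace ℝ E]

theorem integral_birkhoffSum (hT : MeasurePreserving T μ μ) (hF : Integrable F μ) (n : ℕ) :
    ∫ x, birkhoffSum T F n x ∂μ = n • ∫ x, F x ∂μ := by
  have integral_comp_iterate (j : ℕ) : ∫ x, F (T^[j] x) ∂μ = ∫ x, F x ∂μ := by
    have hTj := hT.iterate j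
    rw [← integral_map hTj.aemeasurable (hTj.map_eq.symm ▸ hF.aestronglyMeasurable), hTj.map_eq]
  simp only [birkhoffSum]
  rw [integral_finsetSum (f := fun j x => F (T^[j] x)) _ fun j _ =>
    (hT.iterate j).integrable_comp_of_integrable hF]
  simp only [integral_comp_iterate, Finset.sum_const, Finset.card_range]

theorem integrable_birkhoffAverage (hT : MeasurePreserving T μ μ) (hF : Integrable F μ) (n : ℕ) :
    Integrable (birkhoffAverage ℝ T F n) μ :=
  (integrable_birkhoffSum hT hF n).smul (n : ℝ)⁻¹

theorem integral_birkhoffAverage (hT : MeasurePreserving T μ μ) (hF : Integrable F μ) {n : ℕ}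
    (hn : n ≠ 0) : ∫ x, birkhoffAverage ℝ T F n x ∂μ = ∫ x, F x ∂μ := by
  simp only [birkhoffAverage]
  rw [integral_smul, integral_birkhoffSum hT hF, ← Nat.cast_smul_eq_nsmul ℝ,
    inv_smul_smul₀ (Nat.cast_ne_zero.2 hn)]

end Integral

end BirkhoffAverage

section BowenBall

variable [PseudoMetricSpace X] {T : X → X} {x y z : X} {n N a : ℕ} {ε ε' : ℝ}

theorem mem_bowenBall_comm : y ∈ bowenBall T x n ε ↔ x ∈ bowenBall T y n ε := by
  simp only [bowenBall, mem_ofPred_eq, dist_comm]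

theorem mem_bowenBall_trans (hxy : y ∈ bowenBall T x n ε) (hyz : z ∈ bowenBall T y n ε') :
    z ∈ bowenBall T x n (ε + ε') := fun j hj =>
  (dist_triangle _ (T^[j] y) _).trans_lt (add_lt_add (hxy j hj) (hyz j hj))

theorem bowenBall_subset_bowenBall (h : ε ≤ ε') : bowenBall T x n ε ⊆ bowenBall T x n ε' :=
  fun _ hy j hj => (hy j hj).trans_le h

theorem iterate_mem_bowenBall (hy : y ∈ bowenBall T x N ε) (h : a + n ≤ N) :
    T^[a] y ∈ bowenBall T (T^[a] x) n ε := fun j hj => by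
  simpa only [← Function.iterate_add_apply] using hy (j + a) (by lia)

theorem isOpen_bowenBall (hT : Continuous T) : IsOpen (bowenBall T x n ε) := by
  have : bowenBall T x n ε = ⋂ j ∈ Finset.range n, {y | dist (T^[j] x) (T^[j] y) < ε} := by
    ext y
    simp [bowenBall]
  rw [this]
  exact isOpen_biInter_finset fun j _ =>
    isOpen_lt (continuous_const.dist (hT.iterate j)) continuous_const

theorem exists_finset_card_eq_coverNum [CompactSpace X] (hT : Continuous T) (S : Set X) (n : ℕ)
    (hε : 0 < ε) :
    ∃ F : Finset X, F.card = coverNum T S n ε ∧ S ⊆ ⋃ x ∈ F, bowenBall T x n ε := by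
  have self_mem (x : X) : x ∈ bowenBall T x n ε := fun j _ => by rwa [dist_self]
  obtain ⟨F, hF⟩ := isCompact_univ.elim_finite_subcover (fun x => bowenBall T x n ε)
    (fun x => isOpen_bowenBall hT) fun x _ => mem_iUnion_of_mem x (self_mem x)
  exact Nat.sInf_mem (s := {m | ∃ F : Finset X, F.card = m ∧ S ⊆ ⋃ x ∈ F, bowenBall T x n ε})
    ⟨F.card, F, rfl, (subset_univ S).trans hF⟩

theorem exists_forall_eventually_dist_birkhoffAverage_le [CompactSpace X] {E : Type*}
    [NormedAddCommGroup E] [NormedSpace ℝ E] (T : X → X) {F : X → E} (hF : Continuous F) {δ : ℝ}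
    (hδ : 0 < δ) :
    ∃ ε > 0, ∀ m : ℕ, ∀ᶠ n in atTop, ∀ x, ∀ y ∈ bowenBall T x n ε,
      dist (birkhoffAverage ℝ T F (n + m) x) (birkhoffAverage ℝ T F (n + m) y) ≤ δ := by
  obtain ⟨ε, hε, hFε⟩ := Metric.uniformContinuous_iff.1
    (CompactSpace.uniformContinuous_of_continuous hF) (δ / 2) (half_pos hδ)
  obtain ⟨C, hC⟩ := Metric.isBounded_range_iff.1 (isCompact_range hF).isBounded
  refine ⟨ε, hε, fun m => ?_⟩
  filter_upwards [eventually_gt_atTop 0,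
    (tendsto_natCast_atTop_atTop.const_mul_atTop (half_pos hδ)).eventually_ge_atTop (m * C)]
    with n hn gap_le x y hy
  refine (dist_birkhoffAverage_birkhoffAverage_le ℝ T F (n + m) x y).trans ?_
  rw [div_le_iff₀ (by positivity), Finset.sum_range_add]
  calc ∑ j ∈ Finset.range n, dist (F (T^[j] x)) (F (T^[j] y)) +
        ∑ j ∈ Finset.range m, dist (F (T^[n + j] x)) (F (T^[n + j] y))
      ≤ n * (δ / 2) + m * C := by
        refine add_le_add ?_ ?_
        · simpa using Finset.sum_le_card_nsmul (Finset.range n) _ _ fun j hj =>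
            (hFε (hy j (Finset.mem_range.1 hj))).le
        · simpa using Finset.sum_le_card_nsmul (Finset.range m) _ _ fun j _ => hC _ _
    _ ≤ δ * (n + m : ℕ) := by
        push_cast
        nlinarith [Nat.cast_nonneg (α := ℝ) m]

end BowenBall

section Shadowing

variable [PseudoMetricSpace X] {T : X → X} {n L k : ℕ} {ε : ℝ} {ω ω' : ℕ → X} {y y' z : X}

/-- The orbit of `y` `ε`-shadows the orbit segments of length `n` of `ω 0, …, ω (k - 1)`, the
`j`-th one from time `j * L` on. -/
def IsShadow (T : X → X) (n L k : ℕ) (ε : ℝ) (ω : ℕ → X) (y : X) : Prop :=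
  ∀ j < k, T^[j * L] y ∈ bowenBall T (ω j) n ε

theorem IsShadow.mono {ε' : ℝ} (h : IsShadow T n L k ε ω y) (hε : ε ≤ ε') :
    IsShadow T n L k ε' ω y := fun j hj => bowenBall_subset_bowenBall hε (h j hj)

theorem SpecificationProperty.exists_isShadow (hT : SpecificationProperty T) (hε : 0 < ε) :
    ∃ m : ℕ, ∀ n k : ℕ, 2 ≤ k → ∀ ω : ℕ → X, ∃ y, IsShadow T n (n + m) k ε ω y := by
  obtain ⟨m, -, hm⟩ := hT ε hε
  refine ⟨m, fun n k hk ω => ?_⟩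
  obtain ⟨y, hy⟩ := hm k hk ω (fun i => i * (n + m)) (fun i => i * (n + m) + (n - 1))
    (fun i _ => Nat.le_add_right _ _) fun i _ => by rw [Nat.succ_mul]; lia
  refine ⟨y, fun i hi j hj => ?_⟩
  rw [dist_comm, ← Function.iterate_add_apply, add_comm j]
  exact hy i hi j (by lia)

theorem IsShadow.mem_bowenBall (hω : IsShadow T n L k ε ω y) (hω' : IsShadow T n L k ε ω' y')
    (hy : y ∈ bowenBall T z (k * L) ε) (hy' : y' ∈ bowenBall T z (k * L) ε) (hnL : n ≤ L) {j : ℕ}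
    (hj : j < k) : ω' j ∈ bowenBall T (ω j) n (4 * ε) := by
  have block_le : j * L + n ≤ k * L := by nlinarith
  have toward := mem_bowenBall_trans (hω j hj)
    (mem_bowenBall_comm.1 (iterate_mem_bowenBall hy block_le))
  have back := mem_bowenBall_trans (iterate_mem_bowenBall hy' block_le)
    (mem_bowenBall_comm.1 (hω' j hj))
  rw [show 4 * ε = ε + ε + (ε + ε) by ring]
  exact mem_bowenBall_trans toward back

theorem IsShadow.dist_birkhoffAverage_le {E : Type*} [NormedAddCommGroup E] [NormedSpace ℝ E]
    {F : X → E} {δ : ℝ} (hδ : 0 ≤ δ) (hω : IsShadow T n L k ε ω y)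
    (hF : ∀ x, ∀ y ∈ bowenBall T x n ε,
      dist (birkhoffAverage ℝ T F L x) (birkhoffAverage ℝ T F L y) ≤ δ) :
    dist (birkhoffAverage ℝ T F (k * L) y)
      ((k : ℝ)⁻¹ • ∑ j ∈ Finset.range k, birkhoffAverage ℝ T F L (ω j)) ≤ δ := by
  rw [birkhoffAverage_mul, dist_smul₀, Real.norm_of_nonneg (by positivity)]
  calc (k : ℝ)⁻¹ * dist (∑ j ∈ Finset.range k, birkhoffAverage ℝ T F L (T^[j * L] y))
        (∑ j ∈ Finset.range k, birkhoffAverage ℝ T F L (ω j))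
      ≤ (k : ℝ)⁻¹ * ∑ _j ∈ Finset.range k, δ := by
        gcongr
        refine dist_sum_sum_le_of_le _ fun j hj => ?_
        rw [dist_comm]
        exact hF _ _ (hω j (Finset.mem_range.1 hj))
    _ ≤ δ := by
        rw [Finset.sum_const, Finset.card_range, nsmul_eq_mul, ← mul_assoc]
        exact mul_le_of_le_one_left hδ (inv_mul_le_one_of_le₀ le_rfl (by positivity))

theorem SpecificationProperty.exists_eventually_isShadow_dist_birkhoffAverage_le [CompactSpace X]
    {E : Type*} [NormedAddCommGroup E] [NormedSpace ℝ E] (hT : SpecificationProperty T) {F : X → E}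
    (hF : Continuous F) (hε : 0 < ε) {δ : ℝ} (hδ : 0 < δ) :
    ∃ m : ℕ, ∀ᶠ n in atTop, ∀ k ≥ 2, ∀ ω : ℕ → X, ∃ y, IsShadow T n (n + m) k ε ω y ∧
      dist (birkhoffAverage ℝ T F (k * (n + m)) y)
        ((k : ℝ)⁻¹ • ∑ j ∈ Finset.range k, birkhoffAverage ℝ T F (n + m) (ω j)) ≤ δ := by
  obtain ⟨ε', hε', hFε'⟩ := exists_forall_eventually_dist_birkhoffAverage_le T hF hδ
  obtain ⟨m, hm⟩ := hT.exists_isShadow (lt_min hε hε')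
  refine ⟨m, (hFε' m).mono fun n hn k hk ω => ?_⟩
  obtain ⟨y, hy⟩ := hm n k hk ω
  exact ⟨y, hy.mono (min_le_left _ _),
    (hy.mono (min_le_right _ _)).dist_birkhoffAverage_le hδ.le hn⟩

end Shadowing

section Counting

variable {A : Type*} {T : X → X} {P : X → A} {K : Set X} {n L k : ℕ} {γ η h : ℝ}

/-- The concatenation of the `n`-itineraries of `ω 0, …, ω (k - 1)`, with the letter `i` of the
block `j` at the position `(j, i)`. -/
def blockWord (T : X → X) (P : X → A) (n k : ℕ) (ω : ℕ → X) : Fin k × Fin n → A :=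
  fun q => itinerary T P n (ω q.1) q.2

/-- The sequences whose first `k` orbit segments of length `n` leave `K` with frequency at most
`γ` and carry information at least `h` on average. -/
def typicalBlocks [MeasurableSpace X] (T : X → X) (μ : Measure X) (P : X → A) (K : Set X)
    (n k : ℕ) (γ h : ℝ) : Set (ℕ → X) :=
  {ω | ∑ j ∈ Finset.range k, birkhoffSum T (Kᶜ.indicator 1) n (ω j) ≤ γ * (k * n) ∧
    k * h ≤ ∑ j ∈ Finset.range k, information μ (itinerary T P n) (ω j)}

theorem exists_forall_hammingDist_blockWord_le [PseudoMetricSpace X] [Nonempty A] [DecidableEq A]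
    {ε : ℝ} {E : Set (ℕ → X)} (hK : ∀ x ∈ K, ∀ y ∈ K, dist x y < ε → P x = P y)
    (hclose : ∀ ω ∈ E, ∀ ω' ∈ E, ∀ j < k, ω' j ∈ bowenBall T (ω j) n ε) :
    ∃ σ : Fin k × Fin n → A, ∀ ω ∈ E, (hammingDist (blockWord T P n k ω) σ : ℝ) ≤
      ∑ j ∈ Finset.range k, birkhoffSum T (Kᶜ.indicator 1) n (ω j) := by
  classical
  let bad (ω : ℕ → X) : Finset (Fin k × Fin n) := {q | T^[q.2] (ω q.1) ∉ K}
  have card_bad (ω : ℕ → X) : ((bad ω).card : ℝ) =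
      ∑ j ∈ Finset.range k, birkhoffSum T (Kᶜ.indicator 1) n (ω j) := by
    simp only [bad, Finset.natCast_card_filter, Fintype.sum_prod_type, birkhoffSum,
      Finset.sum_range, indicator_apply, mem_compl_iff, Pi.one_apply]
  obtain ⟨σ, hσ⟩ := exists_forall_hammingDist_le_card (w := blockWord T P n k) (bad := bad)
    fun ω hω ω' hω' q hq hq' =>
      hK _ (by simpa [bad] using hq) _ (by simpa [bad] using hq')
        (hclose ω hω ω' hω' q.1 q.1.2 q.2 q.2.2)
  refine ⟨σ, fun ω hω => ?_⟩
  rw [← card_bad]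
  exact_mod_cast hσ ω hω

variable [MeasurableSpace X] {μ : Measure X} [IsProbabilityMeasure μ]

theorem measureReal_preimage_blockWord_le [MeasurableSpace A] [MeasurableSingletonClass A]
    (hT : Measurable T) (hP : Measurable P) (n k : ℕ) (ω : ℕ → X) :
    (Measure.infinitePi fun _ : ℕ => μ).real (blockWord T P n k ⁻¹' {blockWord T P n k ω}) ≤
      Real.exp (-∑ j ∈ Finset.range k, information μ (itinerary T P n) (ω j)) := by
  have preimage_eq : blockWord T P n k ⁻¹' {blockWord T P n k ω} =
      (Finset.range k : Set ℕ).pi fun j => itinerary T P n ⁻¹' {itinerary T P n (ω j)} := by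
    ext ω'
    simp only [mem_preimage, mem_singleton_iff, funext_iff, Prod.forall, blockWord, Set.mem_pi,
      Finset.mem_coe, Finset.mem_range, Fin.forall_iff (n := k)]
  rw [preimage_eq, measureReal_def, Measure.infinitePi_pi _ fun j _ =>
    measurable_itinerary hT hP n (measurableSet_singleton _), ENNReal.toReal_prod,
    ← Finset.sum_neg_distrib, Real.exp_sum]
  refine Finset.prod_le_prod (fun j _ => ENNReal.toReal_nonneg) fun j _ => ?_
  rw [information, neg_neg]
  exact Real.le_exp_log _

theorem measureReal_le_exp_of_subset_typicalBlocks [PseudoMetricSpace X] [Finite A] [Nonempty A]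
    [DecidableEq A] [MeasurableSpace A] [MeasurableSingletonClass A] (hT : Measurable T)
    (hP : Measurable P) {ε : ℝ} (hK : ∀ x ∈ K, ∀ y ∈ K, dist x y < ε → P x = P y)
    (hγ : ∀ σ : Fin k × Fin n → A,
      ({w | (hammingDist w σ : ℝ) ≤ γ * (k * n)}.ncard : ℝ) ≤ Real.exp (η * (k * n)))
    {E : Set (ℕ → X)} (hE : E ⊆ typicalBlocks T μ P K n k γ h)
    (hclose : ∀ ω ∈ E, ∀ ω' ∈ E, ∀ j < k, ω' j ∈ bowenBall T (ω j) n ε) :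
    (Measure.infinitePi fun _ : ℕ => μ).real E ≤ Real.exp (η * (k * n) - k * h) := by
  obtain ⟨σ, hσ⟩ := exists_forall_hammingDist_blockWord_le hK hclose
  have image_subset :
      blockWord T P n k '' E ⊆ {w | (hammingDist w σ : ℝ) ≤ γ * (k * n)} := by
    rintro _ ⟨ω, hω, rfl⟩
    exact (hσ ω hω).trans (hE hω).1
  have ncard_image_le : ((blockWord T P n k '' E).ncard : ℝ) ≤ Real.exp (η * (k * n)) :=
    (Nat.cast_le.2 (ncard_le_ncard image_subset (toFinite _))).trans (hγ σ)
  calc (Measure.infinitePi fun _ : ℕ => μ).real E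
      ≤ (blockWord T P n k '' E).ncard * Real.exp (-(k * h)) :=
        measureReal_le_ncard_image_mul (toFinite _) fun ω hω =>
          (measureReal_preimage_blockWord_le hT hP n k ω).trans
            (Real.exp_le_exp.2 (neg_le_neg (hE hω).2))
    _ ≤ Real.exp (η * (k * n)) * Real.exp (-(k * h)) := by gcongr
    _ = Real.exp (η * (k * n) - k * h) := by rw [← Real.exp_add, sub_eq_add_neg]

theorem measureReal_le_coverNum_mul_exp [PseudoMetricSpace X] [CompactSpace X] [BorelSpace X]
    [Finite A] [Nonempty A] [DecidableEq A] [MeasurableSpace A] [MeasurableSingletonClass A]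
    (hT : Continuous T) (hP : Measurable P) {ε : ℝ} (hε : 0 < ε)
    (hK : ∀ x ∈ K, ∀ y ∈ K, dist x y < 4 * ε → P x = P y)
    (hγ : ∀ σ : Fin k × Fin n → A,
      ({w | (hammingDist w σ : ℝ) ≤ γ * (k * n)}.ncard : ℝ) ≤ Real.exp (η * (k * n)))
    (hnL : n ≤ L) {S : Set X} {E : Set (ℕ → X)} (hE : E ⊆ typicalBlocks T μ P K n k γ h)
    (hshadow : ∀ ω ∈ E, ∃ y ∈ S, IsShadow T n L k ε ω y) :
    (Measure.infinitePi fun _ : ℕ => μ).real E ≤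
      coverNum T S (k * L) ε * Real.exp (η * (k * n) - k * h) := by
  obtain ⟨C, hC, hSC⟩ := exists_finset_card_eq_coverNum hT S (k * L) hε
  let piece (z : X) : Set (ℕ → X) :=
    {ω ∈ E | ∃ y ∈ bowenBall T z (k * L) ε, IsShadow T n L k ε ω y}
  have subset_pieces : E ⊆ ⋃ z ∈ C, piece z := fun ω hω => by
    obtain ⟨y, hyS, hy⟩ := hshadow ω hω
    obtain ⟨z, hz, hyz⟩ := mem_iUnion₂.1 (hSC hyS)
    exact mem_iUnion₂.2 ⟨z, hz, hω, y, hyz, hy⟩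
  have piece_le (z : X) : (Measure.infinitePi fun _ : ℕ => μ).real (piece z) ≤
      Real.exp (η * (k * n) - k * h) := by
    refine measureReal_le_exp_of_subset_typicalBlocks hT.measurable hP hK hγ
      ((sep_subset _ _).trans hE) ?_
    rintro ω ⟨-, y, hyz, hy⟩ ω' ⟨-, y', hyz', hy'⟩ j hj
    exact hy.mem_bowenBall hy' hyz hyz' hnL hj
  calc (Measure.infinitePi fun _ : ℕ => μ).real E
      ≤ (Measure.infinitePi fun _ : ℕ => μ).real (⋃ z ∈ C, piece z) :=
        measureReal_mono subset_pieces (measure_ne_top _ _)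
    _ ≤ ∑ z ∈ C, (Measure.infinitePi fun _ : ℕ => μ).real (piece z) :=
        measureReal_biUnion_finset_le _ _
    _ ≤ ∑ _z ∈ C, Real.exp (η * (k * n) - k * h) := Finset.sum_le_sum fun z _ => piece_le z
    _ = coverNum T S (k * L) ε * Real.exp (η * (k * n) - k * h) := by
        rw [Finset.sum_const, nsmul_eq_mul, hC]

end Counting

section TypicalBlocks

variable [MeasurableSpace X] {μ : Measure X} [IsProbabilityMeasure μ] {T : X → X} {A : Type*}
  [Fintype A] [MeasurableSpace A] [MeasurableSingletonClass A] {P : X → A} {K : Set X} {n : ℕ}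
  {γ h : ℝ}

theorem ae_eventually_mem_typicalBlocks (hT : MeasurePreserving T μ μ) (hP : Measurable P)
    (hK : MeasurableSet K) (hKγ : μ.real Kᶜ < γ) (hn : 0 < n)
    (hh : h < shannonEntropy μ (itinerary T P n)) :
    ∀ᵐ ω ∂(Measure.infinitePi fun _ : ℕ => μ), ∀ᶠ k in atTop,
      ω ∈ typicalBlocks T μ P K n k γ h := by
  have integrable_indicator : Integrable (Kᶜ.indicator (1 : X → ℝ)) μ :=
    (integrable_const 1).indicator hK.compl
  have integral_bad : ∫ x, birkhoffSum T (Kᶜ.indicator 1) n x ∂μ < γ * n := by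
    rw [integral_birkhoffSum hT integrable_indicator, integral_indicator_one hK.compl,
      nsmul_eq_mul, mul_comm]
    gcongr
  have hmeas := measurable_itinerary hT.measurable hP n
  filter_upwards [ae_tendsto_average_infinitePi (integrable_birkhoffSum hT integrable_indicator n),
    ae_tendsto_average_infinitePi (integrable_information hmeas)] with ω bad_avg info_avg
  rw [integral_information hmeas] at info_avg
  filter_upwards [bad_avg.eventually_lt_const integral_bad, info_avg.eventually_const_lt hh,
    eventually_gt_atTop 0] with k hbad hinfo hk
  rw [smul_eq_mul, inv_mul_lt_iff₀ (by positivity)] at hbad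
  rw [smul_eq_mul, lt_inv_mul_iff₀ (by positivity)] at hinfo
  exact ⟨by linarith, hinfo.le⟩

end TypicalBlocks

section LevelSetEntropy

variable {E : Type*} [NormedAddCommGroup E] [NormedSpace ℝ E] {T : X → X} {F : X → E}

/-- The points whose Birkhoff average of `F` up to time `n` is within `δ` of `a`. -/
def birkhoffLevelSet (T : X → X) (F : X → E) (a : E) (δ : ℝ) (n : ℕ) : Set X :=
  {x | ‖birkhoffAverage ℝ T F n x - a‖ < δ}

/-- The exponential growth rate, as `n → ∞`, then `δ → 0`, then `ε → 0`, of the number of Bowen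
balls of order `n` and radius `ε` needed to cover `birkhoffLevelSet T F a δ n`. As in `LambdaPhi`,
the two monotone limits are written as an infimum and a supremum. -/
noncomputable def levelSetEntropy [PseudoMetricSpace X] (T : X → X) (F : X → E) (a : E) : ℝ≥0∞ :=
  ⨆ (ε : ℝ) (_ : 0 < ε), ⨅ (δ : ℝ) (_ : 0 < δ),
    atTop.limsup fun n : ℕ =>
      ENNReal.ofReal (Real.log (coverNum T (birkhoffLevelSet T F a δ n) n ε) / (n : ℝ))

variable [CompleteSpace E] [PseudoMetricSpace X] [CompactSpace X] [MeasurableSpace X]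
  [BorelSpace X] {μ : Measure X} [IsProbabilityMeasure μ] {A : Type*} [Fintype A]
  [MeasurableSpace A] [MeasurableSingletonClass A] {P : X → A}

theorem eventually_le_log_coverNum_birkhoffLevelSet [DecidableEq A] (hTc : Continuous T)
    (hT : MeasurePreserving T μ μ) (hF : Integrable F μ) (hP : Measurable P) {n L : ℕ} (hn : 0 < n)
    (hnL : n ≤ L) {ε δ γ η h : ℝ} (hε : 0 < ε) (hδ : 0 < δ)
    {K : Set X} (hKm : MeasurableSet K) (hKγ : μ.real Kᶜ < γ)
    (hK : ∀ x ∈ K, ∀ y ∈ K, dist x y < 4 * ε → P x = P y)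
    (hγ : ∀ (k : ℕ) (σ : Fin k × Fin n → A),
      ({w | (hammingDist w σ : ℝ) ≤ γ * (k * n)}.ncard : ℝ) ≤ Real.exp (η * (k * n)))
    (hh : h < shannonEntropy μ (itinerary T P n))
    (hshadow : ∀ k ≥ 2, ∀ ω : ℕ → X, ∃ y, IsShadow T n L k ε ω y ∧
      dist (birkhoffAverage ℝ T F (k * L) y)
        ((k : ℝ)⁻¹ • ∑ j ∈ Finset.range k, birkhoffAverage ℝ T F L (ω j)) ≤ δ / 2) :
    ∀ᶠ k in atTop, k * (h - η * n) - Real.log 2 ≤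
      Real.log (coverNum T (birkhoffLevelSet T F (∫ x, F x ∂μ) δ (k * L)) (k * L) ε) := by
  have := nonempty_of_isProbabilityMeasure μ
  have := ‹Nonempty X›.map P
  let G (k : ℕ) : Set (ℕ → X) := {ω ∈ typicalBlocks T μ P K n k γ h |
    dist ((k : ℝ)⁻¹ • ∑ j ∈ Finset.range k, birkhoffAverage ℝ T F L (ω j)) (∫ x, F x ∂μ) < δ / 2}
  have ae_eventually_mem_G :
      ∀ᵐ ω ∂(Measure.infinitePi fun _ : ℕ => μ), ∀ᶠ k in atTop, ω ∈ G k := by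
    filter_upwards [ae_eventually_mem_typicalBlocks hT hP hKm hKγ hn hh,
      ae_tendsto_average_infinitePi (integrable_birkhoffAverage hT hF L)] with ω typical avg
    rw [integral_birkhoffAverage hT hF (hn.trans_le hnL).ne'] at avg
    exact typical.and (Metric.tendsto_nhds.1 avg _ (half_pos hδ))
  filter_upwards [eventually_ge_atTop 2, eventually_lt_measureReal_of_ae_eventually
    ae_eventually_mem_G one_half_lt_one] with k hk half_lt
  have half_lt_cover := half_lt.trans_le <|
    measureReal_le_coverNum_mul_exp (E := G k) (S := birkhoffLevelSet T F (∫ x, F x ∂μ) δ (k * L))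
      hTc hP hε hK (hγ k) hnL (sep_subset _ _) fun ω hω => by
        obtain ⟨y, hy, hy_avg⟩ := hshadow k hk ω
        refine ⟨y, ?_, hy⟩
        rw [birkhoffLevelSet, mem_ofPred_eq, ← dist_eq_norm, ← add_halves δ]
        exact (dist_triangle _ _ _).trans_lt (add_lt_add_of_le_of_lt hy_avg hω.2)
  have cover_pos := pos_of_mul_pos_left (one_half_pos.trans half_lt_cover) (Real.exp_nonneg _)
  have := Real.log_le_log one_half_pos half_lt_cover.le
  rw [Real.log_mul cover_pos.ne' (Real.exp_ne_zero _), Real.log_exp, one_div, Real.log_inv] at this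
  linarith

theorem exists_forall_frequently_mul_le_log_coverNum (hTc : Continuous T)
    (hspec : SpecificationProperty T) (hT : MeasurePreserving T μ μ) (hF : Continuous F)
    (hP : Measurable P) {c c' : ℝ} (hcc' : c < c')
    (hc' : ∃ᶠ n : ℕ in atTop, c' * n ≤ shannonEntropy μ (itinerary T P n)) :
    ∃ ε > 0, ∀ δ > 0, ∃ᶠ N : ℕ in atTop,
      c * N ≤ Real.log (coverNum T (birkhoffLevelSet T F (∫ x, F x ∂μ) δ N) N ε) := by
  classical
  obtain ⟨η, hη, hcη⟩ : ∃ η > 0, c + 3 * η = c' := ⟨(c' - c) / 3, by linarith, by ring⟩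
  obtain ⟨γ, hγ, hamming⟩ := exists_ncard_hammingDist_le_le_exp A hη
  obtain ⟨K, hKclosed, hKγ, e, he, hK⟩ := exists_isClosed_uniformly_constant μ hP hγ
  refine ⟨e / 4, by positivity, fun δ hδ => ?_⟩
  obtain ⟨m, hm⟩ := hspec.exists_eventually_isShadow_dist_birkhoffAverage_le hF
    (show 0 < e / 4 by positivity) (half_pos hδ)
  obtain ⟨n, hentropy, hn, hshadow, gap_lt⟩ := (hc'.and_eventually <|
    (eventually_gt_atTop 0).and <| hm.and <|
    (tendsto_natCast_atTop_atTop.const_mul_atTop hη).eventually_gt_atTop (c * m)).exists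
  have growth := eventually_le_log_coverNum_birkhoffLevelSet (h := (c' - η) * n) (η := η)
    hTc hT (hF.integrable_of_hasCompactSupport (.of_compactSpace F)) hP hn
    (Nat.le_add_right n m) (show 0 < e / 4 by positivity) hδ hKclosed.measurableSet hKγ
    (by simpa only [mul_div_cancel₀ e four_ne_zero] using hK)
    (fun k σ => by simpa using hamming _ σ)
    (by nlinarith [Nat.cast_pos (α := ℝ).2 hn]) hshadow
  have exceeds : ∀ᶠ k : ℕ in atTop, Real.log 2 ≤ (η * n - c * m) * k :=
    (tendsto_natCast_atTop_atTop.const_mul_atTop (sub_pos.2 gap_lt)).eventually_ge_atTop _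
  have along_multiples : ∀ᶠ k : ℕ in atTop, c * (k * (n + m) : ℕ) ≤ Real.log (coverNum T
      (birkhoffLevelSet T F (∫ x, F x ∂μ) δ (k * (n + m))) (k * (n + m)) (e / 4)) := by
    filter_upwards [growth, exceeds] with k hgrowth hexceeds
    refine le_trans ?_ hgrowth
    push_cast
    subst hcη
    linarith
  have tendsto_multiples : Tendsto (fun k => k * (n + m)) atTop atTop :=
    tendsto_id.atTop_mul_const' (Nat.add_pos_left hn m)
  exact tendsto_multiples.frequently along_multiples.frequently

end LevelSetEntropy

theorem ksEntropy_le_levelSetEntropy [PseudoMetricSpace X] [CompactSpace X] [MeasurableSpace X]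
    [BorelSpace X] {E : Type*} [NormedAddCommGroup E] [NormedSpace ℝ E] [CompleteSpace E]
    {T : X → X} (hTc : Continuous T) (hspec : SpecificationProperty T) {μ : Measure X}
    [IsProbabilityMeasure μ] (hT : MeasurePreserving T μ μ) {F : X → E} (hF : Continuous F) :
    ksEntropy T μ ≤ levelSetEntropy T F (∫ x, F x ∂μ) := by
  refine iSup_le fun P => iSup_le fun hP => iSup_le fun hPfin =>
    le_of_forall_lt_imp_le_of_dense fun b hb => ?_
  obtain ⟨c', hbc', hc'⟩ := ENNReal.lt_iff_exists_nnreal_btwn.1 hb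
  lift b to ℝ≥0 using hbc'.ne_top
  have := hPfin.fintype
  have entropy_ge : ∀ᶠ n : ℕ in atTop,
      c' * n ≤ shannonEntropy μ (itinerary T (rangeFactorization P) n) := by
    filter_upwards [eventually_lt_of_lt_liminf hc'] with n hn
    rw [show P = Subtype.val ∘ rangeFactorization P from rfl,
      partInfo_comp_eq_ofReal_shannonEntropy T μ _ Subtype.val_injective,
      ENNReal.lt_div_iff_mul_lt (by simp) (by simp), ← ENNReal.ofReal_coe_nnreal,
      ← ENNReal.ofReal_natCast, ← ENNReal.ofReal_mul c'.coe_nonneg] at hn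
    exact ((ENNReal.ofReal_lt_ofReal_iff').1 hn).1.le
  obtain ⟨ε, hε, hgrowth⟩ := exists_forall_frequently_mul_le_log_coverNum hTc hspec hT hF
    (P := rangeFactorization P) (hP.codRestrict _) (NNReal.coe_lt_coe.2 (ENNReal.coe_lt_coe.1 hbc'))
    entropy_ge.frequently
  refine le_iSup₂_of_le ε hε (le_iInf₂ fun δ hδ => ?_)
  refine le_limsup_of_frequently_le (((hgrowth δ hδ).and_eventually (eventually_gt_atTop 0)).mono
    fun N hN => ?_)
  rw [← ENNReal.ofReal_coe_nnreal]
  exact ENNReal.ofReal_le_ofReal ((le_div_iff₀ (Nat.cast_pos.2 hN.2)).2 hN.1)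

section WeightedObservables

variable {ι : Type*} {G : ι → Type*} [∀ i, NormedAddCommGroup (G i)]

theorem norm_lp_one_eq_tsum (f : lp G 1) : ‖f‖ = ∑' i, ‖f i‖ := by
  rw [lp.norm_eq_tsum_rpow (by simp)]
  simp only [ENNReal.toReal_one, Real.rpow_one, div_one]

theorem exists_continuous_lp_one_apply_eq [∀ i, CompleteSpace (G i)] {Y : Type*}
    [TopologicalSpace Y] {f : ∀ i, Y → G i} (hf : ∀ i, Continuous (f i)) {u : ι → ℝ}
    (hu : Summable u) (hfu : ∀ i y, ‖f i y‖ ≤ u i) :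
    ∃ F : Y → lp G 1, Continuous F ∧ ∀ y i, F y i = f i y := by
  classical
  have memℓp (y : Y) : Memℓp (fun i => f i y) 1 :=
    memℓp_gen (by simpa using hu.of_nonneg_of_le (fun i => norm_nonneg _) fun i => hfu i y)
  let F (y : Y) : lp G 1 := ⟨fun i => f i y, memℓp y⟩
  have F_eq (y : Y) : F y = ∑' i, lp.single 1 i (f i y) :=
    (lp.hasSum_single ENNReal.one_ne_top (F y)).tsum_eq.symm
  refine ⟨F, ?_, fun y i => rfl⟩
  simp only [funext F_eq]
  exact continuous_tsum (fun i => (lp.isometry_single i).continuous.comp (hf i)) hu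
    fun i y => (lp.norm_single one_pos i _).trans_le (hfu i y)

end WeightedObservables

theorem birkhoffAvgR_eq_birkhoffAverage (T : X → X) (f : X → ℝ) (n : ℕ) (x : X) :
    birkhoffAvgR T f n x = birkhoffAverage ℝ T f n x := by
  rw [birkhoffAvgR, birkhoffAverage, birkhoffSum, smul_eq_mul, div_eq_inv_mul]

theorem exists_continuous_levelSet_eq_birkhoffLevelSet [TopologicalSpace X] [CompactSpace X]
    [MeasurableSpace X] [OpensMeasurableSpace X] {T : X → X} {μ : Measure X} [IsFiniteMeasure μ]
    {Φ : ℕ → X → ℝ} (hΦc : ∀ i, Continuous (Φ i)) (hΦb : ∀ i x, |Φ i x| ≤ 1) {p : ℕ → ℝ}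
    (hp : ∀ i, 0 ≤ p i) (hps : Summable p) {α : ℕ → ℝ} (hα : ∀ i, α i = ∫ x, Φ i x ∂μ) :
    ∃ F : X → lp (fun _ : ℕ => ℝ) 1, Continuous F ∧
      ∀ δ n, levelSet T Φ p α δ n = birkhoffLevelSet T F (∫ x, F x ∂μ) δ n := by
  obtain ⟨F, hF, hFapply⟩ := exists_continuous_lp_one_apply_eq (f := fun i x => p i * Φ i x)
    (fun i => (hΦc i).const_mul _) hps fun i x => by
      rw [norm_mul, Real.norm_of_nonneg (hp i)]
      exact mul_le_of_le_one_right (hp i) (hΦb i x)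
  have hFi : Integrable F μ := hF.integrable_of_hasCompactSupport (.of_compactSpace F)
  let eval (i : ℕ) : lp (fun _ : ℕ => ℝ) 1 →L[ℝ] ℝ := lp.evalCLM ℝ (fun _ : ℕ => ℝ) 1 i
  have eval_comp (i : ℕ) : eval i ∘ F = p i • Φ i := funext fun x => hFapply x i
  have average_apply (n : ℕ) (x : X) (i : ℕ) :
      birkhoffAverage ℝ T F n x i = p i * birkhoffAvgR T (Φ i) n x := by
    calc birkhoffAverage ℝ T F n x i = birkhoffAverage ℝ T (eval i ∘ F) n x :=
          map_birkhoffAverage ℝ ℝ (eval i) T F n x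
      _ = p i * birkhoffAvgR T (Φ i) n x := by
          rw [eval_comp, birkhoffAvgR_eq_birkhoffAverage]
          exact (map_birkhoffAverage ℝ ℝ (AddMonoidHom.mulLeft (p i)) T (Φ i) n x).symm
  have integral_apply (i : ℕ) : (∫ x, F x ∂μ) i = p i * α i := by
    calc (∫ x, F x ∂μ) i = ∫ x, eval i (F x) ∂μ :=
          ((eval i).integral_comp_comm hFi).symm
      _ = p i * α i := by
          rw [hα, ← integral_const_mul]
          exact integral_congr_ae (.of_forall fun x => hFapply x i)
  refine ⟨F, hF, fun δ n => ext fun x => ?_⟩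
  rw [levelSet, birkhoffLevelSet, mem_ofPred_eq, mem_ofPred_eq, norm_lp_one_eq_tsum]
  simp only [lp.coeFn_sub, Pi.sub_apply, average_apply, integral_apply, ← mul_sub, norm_mul,
    Real.norm_of_nonneg (hp _), Real.norm_eq_abs]

theorem lambda_ge_entropy_general {X : Type*} [PseudoMetricSpace X] [CompactSpace X]
    [MeasurableSpace X] [BorelSpace X] (T : X → X) (hT : Continuous T)
    (hspec : SpecificationProperty T)
    (Φ : ℕ → X → ℝ) (hΦc : ∀ i, Continuous (Φ i)) (hΦb : ∀ i x, |Φ i x| ≤ 1)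
    (p : ℕ → ℝ) (hp : ∀ i, 0 ≤ p i) (hps : Summable p)
    (μ : Measure X) (hμ : IsProbabilityMeasure μ) (hinv : MeasurePreserving T μ μ)
    (α : ℕ → ℝ) (hα : ∀ i, α i = ∫ x, Φ i x ∂μ) :
    ksEntropy T μ ≤ LambdaPhi T Φ p α := by
  obtain ⟨F, hF, levelSet_eq⟩ :=
    exists_continuous_levelSet_eq_birkhoffLevelSet (T := T) hΦc hΦb hp hps hα
  simp only [LambdaPhi, levelSet_eq]
  exact ksEntropy_le_levelSetEntropy hT hspec hinv hF

/-- **Proposition 3.2.** In a system with the specification property, for `(Φ_i)` dense in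
the unit ball of `C(X)`, `(p_i)` positive with `Σ p_i = 1`, `μ` invariant and
`α_i = ∫ Φ_i dμ`, one has `Λ_Φ(α) ≥ h_μ`. -/
theorem lambda_ge_entropy {X : Type*} [MetricSpace X] [CompactSpace X]
    [MeasurableSpace X] [BorelSpace X] (T : X → X) (hT : Continuous T)
    (hspec : SpecificationProperty T)
    (Φ : ℕ → X → ℝ) (hΦc : ∀ i, Continuous (Φ i)) (hΦb : ∀ i x, |Φ i x| ≤ 1)
    (hdense : ∀ f : C(X, ℝ), ‖f‖ ≤ 1 → ∀ ε : ℝ, 0 < ε → ∃ i, ∀ x, |Φ i x - f x| < ε)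
    (p : ℕ → ℝ) (hp : ∀ i, 0 < p i) (hps : Summable p) (hp1 : ∑' i, p i = 1)
    (μ : Measure X) (hμ : IsProbabilityMeasure μ) (hinv : MeasurePreserving T μ μ)
    (α : ℕ → ℝ) (hα : ∀ i, α i = ∫ x, Φ i x ∂μ) :
    ksEntropy T μ ≤ LambdaPhi T Φ p α :=
  lambda_ge_entropy_general T hT hspec Φ hΦc hΦb p (fun i => (hp i).le) hps μ hμ hinv α hα
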